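/- Let p be an odd prime, m ≥ 0 an integer, a an integer with 1 ≤ a ≤ p−1, and r an integer with a·p^m − 1 < r ≤ p^{m+1} − 2 and r ≡ a − 1 (mod p−1). Then p divides the binomial coefficient C(r, a·p^m − 1). -/

import Mathlib

/-- Let `p` be an odd prime, `m ≥ 0`, `1 ≤ a ≤ p-1`, and `r` with
`a·p^m - 1 < r ≤ p^{m+1} - 2` and `r ≡ a - 1 (mod p-1)`.  Then `p` divides the
binomial coefficient `C(r, a·p^m - 1)`. -/
theorem stmt16 (p : ℕ) [Fact p.Prime] (hp : Odd p) (m a r : ℕ)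
    (ha1 : 1 ≤ a) (ha2 : a ≤ p - 1)
    (hr1 : a * p ^ m - 1 < r) (hr2 : r ≤ p ^ (m + 1) - 2)
    (hmod : r ≡ a - 1 [MOD p - 1]) :
    p ∣ r.choose (a * p ^ m - 1) := by
  have hp2 : 2 ≤ p := (Fact.out : p.Prime).two_le
  induction m generalizing r with
  | zero =>
    exfalso
    simp only [pow_zero, mul_one, zero_add, pow_one] at hr1 hr2
    have h := Nat.ModEq.eq_of_lt_of_lt hmod (by omega) (by omega)
    omega
  | succ m ih =>
    have hK : 1 ≤ a * p ^ m := Nat.mul_pos ha1 (by positivity)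
    have hKe : a * p ^ (m + 1) = p * (a * p ^ m) := by ring
    have hPe : p ^ (m + 1 + 1) = p * p ^ (m + 1) := by ring
    rw [hKe] at hr1 ⊢
    rw [hPe] at hr2
    obtain ⟨k, hk⟩ : ∃ k, a * p ^ m = k + 1 := ⟨a * p ^ m - 1, by omega⟩
    have hk2 : p * (a * p ^ m) - 1 = (p - 1) + p * k := by
      rw [hk, mul_add]; omega
    have hkm : (p * (a * p ^ m) - 1) % p = p - 1 := by
      rw [hk2, Nat.add_mul_mod_self_left, Nat.mod_eq_of_lt (by omega)]
    have hkd : (p * (a * p ^ m) - 1) / p = a * p ^ m - 1 := by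
      rw [hk2, Nat.add_mul_div_left _ _ (by omega), Nat.div_eq_of_lt (by omega)]; omega
    have hL := Choose.choose_modEq_choose_mod_mul_choose_div_nat (p := p)
      (n := r) (k := p * (a * p ^ m) - 1)
    rw [hkm, hkd] at hL
    rw [hL.dvd_iff dvd_rfl]
    have hlt : r % p < p := Nat.mod_lt _ (by omega)
    by_cases hc : r % p = p - 1
    · apply Dvd.dvd.mul_left
      have hr := Nat.mod_add_div r p
      rw [hc] at hr
      generalize r / p = s at hr ⊢
      have hpos : 0 < p ^ (m + 1) := by positivity
      apply ih
      · rw [hk2] at hr1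
        have : p * k < p * s := by omega
        have := Nat.lt_of_mul_lt_mul_left this
        omega
      · have h2 : 1 * p ≤ p ^ (m + 1) * p := Nat.mul_le_mul_right _ hpos
        have h3 : p * (s + 1) < p * p ^ (m + 1) := by
          rw [mul_add]; rw [mul_comm (p ^ (m+1))] at h2; omega
        have := Nat.lt_of_mul_lt_mul_left h3
        omega
      · refine Nat.ModEq.trans ?_ hmod
        have : r = s + (p - 1) * (s + 1) := by
          obtain ⟨q, rfl⟩ : ∃ q, p = q + 1 := ⟨p - 1, by omega⟩
          rw [← hr]; simp only [Nat.add_sub_cancel]; ring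
        rw [this]
        simp [Nat.ModEq]
    · rw [Nat.choose_eq_zero_of_lt (by omega)]
      simp
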